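/- arXiv:1604.00775 — 4 statements merged into one kernel-verified Lean document; each statement's English description precedes it below -/
import Mathlib

section
/- Let A and B be observables on ℂ^n and let Λ be a broadcasting channel with Kraus operators K_i such that Λ*(A(x) ⊗ 1) = A(x) and Λ*(1 ⊗ B(y)) = B(y) for all outcomes x, y. Then J(x,y) := ∑_i K_iᴴ (A(x) ⊗ B(y)) K_i defines a joint observable of A and B: each J(x,y) is positive semidefinite, ∑_{y∈Ω_B} J(x,y) = A(x), and ∑_{x∈Ω_A} J(x,y) = B(y). In particular, one-side broadcastable observables are compatible. -/
open Matrix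
open scoped Kronecker ComplexOrder

noncomputable section

abbrev Mat (n : ℕ) : Type := Matrix (Fin n) (Fin n) ℂ

section KroneckerSum

variable {ι l m p q R : Type*} [NonUnitalNonAssocSemiring R]

lemma sum_kronecker (s : Finset ι) (A : ι → Matrix l m R) (B : Matrix p q R) :
    (∑ i ∈ s, A i) ⊗ₖ B = ∑ i ∈ s, A i ⊗ₖ B := by
  ext ⟨a, b⟩ ⟨c, d⟩
  simp [Matrix.sum_apply, Finset.sum_mul]

lemma kronecker_sum (s : Finset ι) (A : Matrix l m R) (B : ι → Matrix p q R) :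
    A ⊗ₖ ∑ i ∈ s, B i = ∑ i ∈ s, A ⊗ₖ B i := by
  ext ⟨a, b⟩ ⟨c, d⟩
  simp [Matrix.sum_apply, Finset.mul_sum]

end KroneckerSum

section Observables

open scoped MatrixOrder

variable {𝕜 α β ι l m p q r : Type*} [RCLike 𝕜]

/-- The Heisenberg dual of the completely positive map with Kraus operators `K`,
bundled only as a positive linear map: complete positivity is not recorded. -/
def krausDual [Fintype ι] [Fintype p] [Finite r] (K : ι → Matrix p r 𝕜) :
    Matrix p p 𝕜 →ₚ[𝕜] Matrix r r 𝕜 :=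
  .mk₀
    { toFun X := ∑ i, (K i)ᴴ * X * K i
      map_add' X Y := by simp only [Matrix.mul_add, Matrix.add_mul, Finset.sum_add_distrib]
      map_smul' c X := by
        simp only [Matrix.mul_smul, Matrix.smul_mul, Finset.smul_sum, RingHom.id_apply] }
    fun _ hX ↦ (posSemidef_sum _ fun i _ ↦ hX.posSemidef.conjTranspose_mul_mul_same (K i)).nonneg

lemma krausDual_apply [Fintype ι] [Fintype p] [Finite r] (K : ι → Matrix p r 𝕜)
    (X : Matrix p p 𝕜) : krausDual K X = ∑ i, (K i)ᴴ * X * K i :=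
  rfl

lemma krausDual_one [Fintype ι] [Fintype p] [DecidableEq p] [Finite r] (K : ι → Matrix p r 𝕜) :
    krausDual K 1 = ∑ i, (K i)ᴴ * K i := by
  simp only [krausDual_apply, Matrix.mul_one]

/-- A finite-outcome observable (POVM): a family of positive semidefinite matrices, the effects,
summing to the identity. -/
structure IsObservable [Fintype α] [DecidableEq r] (A : α → Matrix r r 𝕜) : Prop where
  posSemidef : ∀ x, (A x).PosSemidef
  sum_eq_one : ∑ x, A x = 1

/-- `J` is a joint observable of `A` and `B`: an observable on pairs of outcomes, here curried,
with marginals `A` and `B`. -/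
structure IsJointObservable [Fintype α] [Fintype β] [DecidableEq r]
    (J : α → β → Matrix r r 𝕜) (A : α → Matrix r r 𝕜) (B : β → Matrix r r 𝕜) : Prop
    extends IsObservable (Function.uncurry J) where
  sum_right : ∀ x, ∑ y, J x y = A x
  sum_left : ∀ y, ∑ x, J x y = B y

namespace IsObservable

variable [Fintype α] [Fintype β] {A : α → Matrix p p 𝕜} {B : β → Matrix q q 𝕜}

lemma map [DecidableEq p] [DecidableEq r] (hA : IsObservable A)
    (Φ : Matrix p p 𝕜 →ₚ[𝕜] Matrix r r 𝕜) (hΦ : Φ 1 = 1) : IsObservable fun x ↦ Φ (A x) where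
  posSemidef x := (Φ.map_nonneg (hA.posSemidef x).nonneg).posSemidef
  sum_eq_one := by rw [← map_sum, hA.sum_eq_one, hΦ]

lemma sum_kronecker_eq_one_kronecker [DecidableEq p] (hA : IsObservable A)
    (Y : Matrix l m 𝕜) : ∑ x, A x ⊗ₖ Y = (1 : Matrix p p 𝕜) ⊗ₖ Y := by
  rw [← sum_kronecker, hA.sum_eq_one]

lemma sum_kronecker_eq_kronecker_one [DecidableEq q] (hB : IsObservable B)
    (X : Matrix l m 𝕜) : ∑ y, X ⊗ₖ B y = X ⊗ₖ (1 : Matrix q q 𝕜) := by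
  rw [← kronecker_sum, hB.sum_eq_one]

lemma kronecker [Finite p] [Finite q] [DecidableEq p] [DecidableEq q]
    (hA : IsObservable A) (hB : IsObservable B) :
    IsObservable fun z : α × β ↦ A z.1 ⊗ₖ B z.2 where
  posSemidef z := (hA.posSemidef z.1).kronecker (hB.posSemidef z.2)
  sum_eq_one := by
    simp only [Fintype.sum_prod_type, hB.sum_kronecker_eq_kronecker_one,
      hA.sum_kronecker_eq_one_kronecker, one_kronecker_one]

end IsObservable

theorem one_side_broadcast_gives_joint_observable_general
    [Fintype α] [Fintype β] [Finite p] [Finite q] [DecidableEq p] [DecidableEq q] [DecidableEq r]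
    {A : α → Matrix p p 𝕜} {B : β → Matrix q q 𝕜} (hA : IsObservable A) (hB : IsObservable B)
    {A' : α → Matrix r r 𝕜} {B' : β → Matrix r r 𝕜}
    (Φ : Matrix (p × q) (p × q) 𝕜 →ₚ[𝕜] Matrix r r 𝕜) (hΦ : Φ 1 = 1)
    (hA' : ∀ x, Φ (A x ⊗ₖ 1) = A' x) (hB' : ∀ y, Φ (1 ⊗ₖ B y) = B' y) :
    IsJointObservable (fun x y ↦ Φ (A x ⊗ₖ B y)) A' B' where
  toIsObservable := (hA.kronecker hB).map Φ hΦ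
  sum_right x := by rw [← map_sum, hB.sum_kronecker_eq_kronecker_one, hA']
  sum_left y := by rw [← map_sum, hA.sum_kronecker_eq_one_kronecker, hB']

end Observables

/-- If a broadcasting channel one-side broadcasts A and B, then
J(x,y) = Λ*(A(x) ⊗ B(y)) is a joint observable of A and B; in particular
one-side broadcastable observables are compatible. -/
theorem one_side_broadcast_gives_joint_observable {n : ℕ}
    {ΩA ΩB : Type} [Fintype ΩA] [Fintype ΩB]
    (A : ΩA → Mat n) (B : ΩB → Mat n)
    (hApos : ∀ x, (A x).PosSemidef) (hAsum : ∑ x, A x = 1)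
    (hBpos : ∀ y, (B y).PosSemidef) (hBsum : ∑ y, B y = 1)
    {m : ℕ} (K : Fin m → Matrix (Fin n × Fin n) (Fin n) ℂ)
    (hK : ∑ i, (K i)ᴴ * K i = 1)
    (hA : ∀ x, ∑ i, (K i)ᴴ * (A x ⊗ₖ (1 : Mat n)) * K i = A x)
    (hB : ∀ y, ∑ i, (K i)ᴴ * ((1 : Mat n) ⊗ₖ B y) * K i = B y) :
    (∀ x y, (∑ i, (K i)ᴴ * (A x ⊗ₖ B y) * K i).PosSemidef) ∧
    (∀ x, ∑ y, ∑ i, (K i)ᴴ * (A x ⊗ₖ B y) * K i = A x) ∧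
    (∀ y, ∑ x, ∑ i, (K i)ᴴ * (A x ⊗ₖ B y) * K i = B y) := by
  have hJ := one_side_broadcast_gives_joint_observable_general ⟨hApos, hAsum⟩ ⟨hBpos, hBsum⟩
    (krausDual K) ((krausDual_one K).trans hK) hA hB
  exact ⟨fun x y ↦ hJ.posSemidef (x, y), hJ.sum_right, hJ.sum_left⟩
end
end

section
/- For two qubit observables A and B (observables on ℂ²), the following are equivalent: (i) A and B are mutually commuting, i.e., A(x)B(y) = B(y)A(x) for all outcomes x, y; (ii) A and B are mutually nondisturbing; (iii) A and B are nondisturbing, i.e., A can be measured without disturbing B or B can be measured without disturbing A. -/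
open Matrix
open scoped Kronecker ComplexOrder

noncomputable section

/-- Observable `A` can be measured without disturbing observable `B`. -/
def CanMeasureWithoutDisturbing {n : ℕ} {ΩA ΩB : Type} [Fintype ΩA] [Fintype ΩB]
    (A : ΩA → Mat n) (B : ΩB → Mat n) : Prop :=
  ∃ (m : ℕ) (K : ΩA → Fin m → Mat n),
    (∀ x, ∑ i, (K x i)ᴴ * K x i = A x) ∧
    (∀ y, ∑ x, ∑ i, (K x i)ᴴ * B y * K x i = B y)

/-!
If `K` is a finite Kraus family with `Φ b = ∑ i, star (K i) * b * K i` and `Φ 1 = 1`, then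
`∑ i, star (b * K i - K i * b) * (b * K i - K i * b)` expands to
`Φ (star b * b) - star (Φ b) * b - star b * Φ b + star b * b`. It vanishes as soon as `Φ` fixes both
`b` and `star b * b`, and then every `K i` commutes with `b`. For a self-adjoint `2 × 2` matrix
the second condition is automatic, since `b * b` is a combination of `1` and `b` by Cayley–Hamilton.
Conversely, measuring `A` with Kraus operators `√(A x)` disturbs nothing that commutes with `A`.
-/

section KrausMap

variable {R ι : Type*} [Fintype ι]

/-- The Heisenberg-picture map `b ↦ ∑ i, star (K i) * b * K i` of a finite Kraus family `K`,
which describes how measuring with `K` transforms the effects of a later measurement. -/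
def krausMap [Ring R] [Star R] [Algebra ℂ R] (K : ι → R) : R →ₗ[ℂ] R :=
  ∑ i, LinearMap.mulLeftRight ℂ (star (K i), K i)

lemma krausMap_apply [Ring R] [Star R] [Algebra ℂ R] (K : ι → R) (b : R) :
    krausMap K b = ∑ i, star (K i) * b * K i := by
  simp [krausMap, LinearMap.sum_apply]

lemma krausMap_star [Ring R] [StarRing R] [Algebra ℂ R] (K : ι → R) (b : R) :
    krausMap K (star b) = star (krausMap K b) := by
  simp [krausMap_apply, star_sum, mul_assoc]

lemma sum_star_commutator_mul_commutator [Ring R] [StarRing R] [Algebra ℂ R] (K : ι → R) (b : R) :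
    ∑ i, star (b * K i - K i * b) * (b * K i - K i * b) =
      krausMap K (star b * b) - krausMap K (star b) * b - star b * krausMap K b +
        star b * krausMap K 1 * b := by
  simp only [krausMap_apply, Finset.sum_mul, Finset.mul_sum, ← Finset.sum_sub_distrib,
    ← Finset.sum_add_distrib, star_sub, star_mul]
  exact Finset.sum_congr rfl fun i _ => by noncomm_ring

lemma sum_star_mul_self_eq_zero_iff [NonUnitalNormedRing R] [StarRing R] [CStarRing R]
    [PartialOrder R] [StarOrderedRing R] {x : ι → R} :
    ∑ i, star (x i) * x i = 0 ↔ ∀ i, x i = 0 := by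
  simp [Finset.sum_eq_zero_iff_of_nonneg fun i _ => star_mul_self_nonneg (x i)]

lemma krausMap_eq_self_of_mem_span [Ring R] [Star R] [Algebra ℂ R] {K : ι → R} {s : Set R}
    (hs : ∀ b ∈ s, krausMap K b = b) {b : R} (hb : b ∈ Submodule.span ℂ s) : krausMap K b = b :=
  LinearMap.eqOn_span (g := LinearMap.id) hs hb

variable [NormedRing R] [StarRing R] [CStarRing R] [Algebra ℂ R] [PartialOrder R]
  [StarOrderedRing R] {K : ι → R} {b : R}

theorem commute_of_krausMap_eq_self (h_one : krausMap K 1 = 1) (hb : krausMap K b = b)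
    (hbb : krausMap K (star b * b) = star b * b) (i : ι) : Commute b (K i) := by
  have h_sum : ∑ i, star (b * K i - K i * b) * (b * K i - K i * b) = 0 := by
    rw [sum_star_commutator_mul_commutator, krausMap_star, h_one, hb, hbb]
    noncomm_ring
  exact sub_eq_zero.mp (sum_star_mul_self_eq_zero_iff.mp h_sum i)

theorem commute_of_krausMap_eq_self_of_mul_self_mem_span (h_one : krausMap K 1 = 1)
    (hb : krausMap K b = b) (hb_sa : IsSelfAdjoint b)
    (hb_sq : b * b ∈ Submodule.span ℂ {1, b}) (i : ι) : Commute b (K i) := by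
  refine commute_of_krausMap_eq_self h_one hb ?_ i
  rw [hb_sa.star_eq]
  exact krausMap_eq_self_of_mem_span (by simp [h_one, hb]) hb_sq

end KrausMap

lemma commute_sum_star_mul_self {R ι : Type*} [NonUnitalSemiring R] [StarRing R] [Fintype ι]
    {K : ι → R} {b : R} (hb : IsSelfAdjoint b) (hK : ∀ i, Commute b (K i)) :
    Commute (∑ i, star (K i) * K i) b := by
  refine Commute.sum_left _ _ _ fun i _ => Commute.mul_left ?_ (hK i).symm
  simpa [hb.star_eq] using (hK i).symm.star_star

lemma star_sqrt_mul_mul_sqrt_of_commute {R : Type*} [CStarAlgebra R] [PartialOrder R]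
    [StarOrderedRing R] {a b : R} (ha : 0 ≤ a) (hab : Commute a b) :
    star (CFC.sqrt a) * b * CFC.sqrt a = a * b := by
  have h_comm : Commute (CFC.sqrt a) b := hab.cfcₙ_nnreal NNReal.sqrt
  rw [(CFC.sqrt_nonneg a).star_eq, mul_assoc, ← h_comm.eq, ← mul_assoc, CFC.sqrt_mul_sqrt_self a]

lemma mul_self_eq_trace_smul_sub_det_smul {R : Type*} [CommRing R]
    (M : Matrix (Fin 2) (Fin 2) R) : M * M = M.trace • M - M.det • 1 := by
  nontriviality R
  have h := M.aeval_self_charpoly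
  simp only [Matrix.charpoly_fin_two, map_add, map_sub, map_mul, map_pow, Polynomial.aeval_X,
    Polynomial.aeval_C, Algebra.algebraMap_eq_smul_one, smul_one_mul] at h
  rw [← pow_two, ← sub_eq_zero, ← h]
  abel

lemma mul_self_mem_span_one_self {R : Type*} [CommRing R]
    (M : Matrix (Fin 2) (Fin 2) R) : M * M ∈ Submodule.span R {1, M} :=
  Submodule.mem_span_pair.mpr
    ⟨-M.det, M.trace, by rw [mul_self_eq_trace_smul_sub_det_smul]; module⟩

section Observables

variable {n : ℕ} {ΩA ΩB : Type} [Fintype ΩA] [Fintype ΩB] {A : ΩA → Mat n} {B : ΩB → Mat n}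

open scoped MatrixOrder Matrix.Norms.L2Operator in
theorem canMeasureWithoutDisturbing_of_commute (hApos : ∀ x, (A x).PosSemidef)
    (hAsum : ∑ x, A x = 1) (hAB : ∀ x y, Commute (A x) (B y)) :
    CanMeasureWithoutDisturbing A B := by
  have hA (x : ΩA) : 0 ≤ A x := Matrix.nonneg_iff_posSemidef.mpr (hApos x)
  refine ⟨1, fun x _ => CFC.sqrt (A x), fun x => ?_, fun y => ?_⟩
  · simpa [Matrix.star_eq_conjTranspose] using
      star_sqrt_mul_mul_sqrt_of_commute (hA x) (Commute.one_right (A x))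
  · simp [← Matrix.star_eq_conjTranspose, star_sqrt_mul_mul_sqrt_of_commute (hA _) (hAB _ y),
      ← Finset.sum_mul, hAsum]

open scoped MatrixOrder Matrix.Norms.L2Operator in
theorem CanMeasureWithoutDisturbing.commute (h : CanMeasureWithoutDisturbing A B)
    (hAsum : ∑ x, A x = 1) (hBherm : ∀ y, (B y).IsHermitian)
    (hBsq : ∀ y, B y * B y ∈ Submodule.span ℂ {1, B y}) (x : ΩA) (y : ΩB) :
    Commute (A x) (B y) := by
  obtain ⟨m, K, hKA, hKB⟩ := h
  have h_one : krausMap (Function.uncurry K) 1 = 1 := by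
    simp [krausMap_apply, Fintype.sum_prod_type, Matrix.star_eq_conjTranspose, hKA, hAsum]
  have h_fix : krausMap (Function.uncurry K) (B y) = B y := by
    simpa [krausMap_apply, Fintype.sum_prod_type, Matrix.star_eq_conjTranspose] using hKB y
  have h_comm (i : Fin m) : Commute (B y) (K x i) :=
    commute_of_krausMap_eq_self_of_mul_self_mem_span h_one h_fix (hBherm y) (hBsq y) (x, i)
  rw [← hKA x]
  exact commute_sum_star_mul_self (hBherm y) h_comm

theorem canMeasureWithoutDisturbing_iff_forall_commute (hApos : ∀ x, (A x).PosSemidef)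
    (hAsum : ∑ x, A x = 1) (hBherm : ∀ y, (B y).IsHermitian)
    (hBsq : ∀ y, B y * B y ∈ Submodule.span ℂ {1, B y}) :
    CanMeasureWithoutDisturbing A B ↔ ∀ x y, Commute (A x) (B y) :=
  ⟨fun h => h.commute hAsum hBherm hBsq, canMeasureWithoutDisturbing_of_commute hApos hAsum⟩

end Observables

theorem qubit_nondisturbing_iff_mutually_commuting_general
    {n : ℕ} {ΩA ΩB : Type} [Fintype ΩA] [Fintype ΩB]
    (A : ΩA → Mat n) (B : ΩB → Mat n)
    (hApos : ∀ x, (A x).PosSemidef) (hAsum : ∑ x, A x = 1)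
    (hBpos : ∀ y, (B y).PosSemidef) (hBsum : ∑ y, B y = 1)
    (hAsq : ∀ x, A x * A x ∈ Submodule.span ℂ {1, A x})
    (hBsq : ∀ y, B y * B y ∈ Submodule.span ℂ {1, B y}) :
    ((∀ x y, A x * B y = B y * A x) ↔
      (CanMeasureWithoutDisturbing A B ∧ CanMeasureWithoutDisturbing B A)) ∧
    ((CanMeasureWithoutDisturbing A B ∧ CanMeasureWithoutDisturbing B A) ↔
      (CanMeasureWithoutDisturbing A B ∨ CanMeasureWithoutDisturbing B A)) := by
  have hAB : CanMeasureWithoutDisturbing A B ↔ ∀ x y, A x * B y = B y * A x :=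
    canMeasureWithoutDisturbing_iff_forall_commute hApos hAsum (fun y => (hBpos y).1) hBsq
  have hBA : CanMeasureWithoutDisturbing B A ↔ ∀ x y, A x * B y = B y * A x := by
    rw [canMeasureWithoutDisturbing_iff_forall_commute hBpos hBsum (fun x => (hApos x).1) hAsq,
      forall_comm]
    exact forall₂_congr fun _ _ => eq_comm
  rw [hAB, hBA, and_self_iff, or_self_iff]
  exact ⟨Iff.rfl, Iff.rfl⟩

/-- For qubit observables, mutual commutativity, mutual nondisturbance
and nondisturbance are all equivalent. -/
theorem qubit_nondisturbing_iff_mutually_commuting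
    {ΩA ΩB : Type} [Fintype ΩA] [Fintype ΩB]
    (A : ΩA → Mat 2) (B : ΩB → Mat 2)
    (hApos : ∀ x, (A x).PosSemidef) (hAsum : ∑ x, A x = 1)
    (hBpos : ∀ y, (B y).PosSemidef) (hBsum : ∑ y, B y = 1) :
    ((∀ x y, A x * B y = B y * A x) ↔
      (CanMeasureWithoutDisturbing A B ∧ CanMeasureWithoutDisturbing B A)) ∧
    ((CanMeasureWithoutDisturbing A B ∧ CanMeasureWithoutDisturbing B A) ↔
      (CanMeasureWithoutDisturbing A B ∨ CanMeasureWithoutDisturbing B A)) :=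
  qubit_nondisturbing_iff_mutually_commuting_general A B hApos hAsum hBpos hBsum
    (fun x => mul_self_mem_span_one_self (A x)) (fun y => mul_self_mem_span_one_self (B y))
end
end

section
/- Two qubit observables A and B (observables on ℂ²) are broadcastable — i.e., there exists a broadcasting channel Λ with Λ*(A(x) ⊗ 1) = A(x) = Λ*(1 ⊗ A(x)) and Λ*(B(y) ⊗ 1) = B(y) = Λ*(1 ⊗ B(y)) for all outcomes x, y — if and only if A is commutative, B is commutative, and A and B are mutually commuting. -/
open Matrix
open scoped Kronecker ComplexOrder

noncomputable section

/-!
If `Λ*` maps `H ⊗ 1` to `H` and `H` satisfies a quadratic equation (for qubits: Cayley–Hamilton),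
then `Λ*` also maps `(H ⊗ 1)²` to `H²`, so `H ⊗ 1` lies in the multiplicative domain of `Λ*` and
`(H ⊗ 1) Kᵢ = Kᵢ H` for each Kraus operator. Likewise `(1 ⊗ G) Kᵢ = Kᵢ G`. As `H ⊗ 1` and `1 ⊗ G`
commute, `Kᵢ H G = Kᵢ G H`, and `∑ Kᵢᴴ Kᵢ = 1` gives `H G = G H`.

Conversely, commuting Hermitian matrices have a common orthonormal eigenbasis `e`, and the isometry
`e k ↦ e k ⊗ e k` broadcasts every matrix that is diagonal in it.
-/

section HeisenbergDual

variable {R ι m n : Type*} [CommRing R] [StarRing R] [Fintype ι] [Fintype m]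

/-- The Heisenberg dual `Λ*` of the completely positive map `Λ` with Kraus operators `K i`. No
normalization is built in: `Λ` is a channel iff `heisenbergDual K 1 = 1`. -/
def heisenbergDual (K : ι → Matrix m n R) : Matrix m m R →ₗ[R] Matrix n n R where
  toFun X := ∑ i, (K i)ᴴ * X * K i
  map_add' X Y := by simp only [Matrix.mul_add, Matrix.add_mul, Finset.sum_add_distrib]
  map_smul' c X := by
    simp only [Matrix.mul_smul, Matrix.smul_mul, Finset.smul_sum, RingHom.id_apply]

theorem heisenbergDual_apply (K : ι → Matrix m n R) (X : Matrix m m R) :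
    heisenbergDual K X = ∑ i, (K i)ᴴ * X * K i :=
  rfl

theorem heisenbergDual_one [DecidableEq m] (K : ι → Matrix m n R) :
    heisenbergDual K 1 = ∑ i, (K i)ᴴ * K i := by
  simp only [heisenbergDual_apply, Matrix.mul_one]

theorem heisenbergDual_conjTranspose (K : ι → Matrix m n R) (X : Matrix m m R) :
    heisenbergDual K Xᴴ = (heisenbergDual K X)ᴴ := by
  simp only [heisenbergDual_apply, conjTranspose_sum, conjTranspose_mul,
    conjTranspose_conjTranspose, Matrix.mul_assoc]

variable [Fintype n]

theorem sum_conjTranspose_mul_self_mul_sub_mul [DecidableEq m] (K : ι → Matrix m n R)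
    (X : Matrix m m R) (H : Matrix n n R) :
    ∑ i, (X * K i - K i * H)ᴴ * (X * K i - K i * H) =
      heisenbergDual K (Xᴴ * X) - (heisenbergDual K X)ᴴ * H - Hᴴ * heisenbergDual K X +
        Hᴴ * heisenbergDual K 1 * H := by
  rw [← heisenbergDual_conjTranspose]
  simp only [heisenbergDual_apply, Finset.sum_mul, Finset.mul_sum, ← Finset.sum_sub_distrib,
    ← Finset.sum_add_distrib]
  refine Finset.sum_congr rfl fun i _ => ?_
  simp only [conjTranspose_sub, conjTranspose_mul, Matrix.mul_sub, Matrix.sub_mul,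
    Matrix.mul_assoc, Matrix.one_mul]
  abel

open scoped MatrixOrder in
theorem sum_conjTranspose_mul_self_eq_zero_iff {𝕜 ι m n : Type*} [RCLike 𝕜] [Fintype ι] [Fintype m]
    [Finite n] (M : ι → Matrix m n 𝕜) : ∑ i, (M i)ᴴ * M i = 0 ↔ ∀ i, M i = 0 := by
  cases nonempty_fintype n
  rw [Finset.sum_eq_zero_iff_of_nonneg fun i _ => (posSemidef_conjTranspose_mul_self (M i)).nonneg]
  simp only [Finset.mem_univ, forall_const, conjTranspose_mul_self_eq_zero]

variable [DecidableEq m] [DecidableEq n]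

/-- Choi's multiplicative domain: equality in the Kadison–Schwarz inequality forces intertwining. -/
theorem mul_kraus_eq_kraus_mul {𝕜 : Type*} [RCLike 𝕜] {K : ι → Matrix m n 𝕜}
    (hK : heisenbergDual K 1 = 1) {X : Matrix m m 𝕜} {H : Matrix n n 𝕜}
    (hX : heisenbergDual K X = H) (hXX : heisenbergDual K (Xᴴ * X) = Hᴴ * H) (i : ι) :
    X * K i = K i * H := by
  refine sub_eq_zero.1 ((sum_conjTranspose_mul_self_eq_zero_iff fun i => X * K i - K i * H).1 ?_ i)
  rw [sum_conjTranspose_mul_self_mul_sub_mul, hXX, hX, hK, Matrix.mul_one, sub_self, zero_sub,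
    neg_add_cancel]

theorem commute_of_mul_kraus_eq {K : ι → Matrix m n R} (hK : heisenbergDual K 1 = 1)
    {X Y : Matrix m m R} {H G : Matrix n n R} (hXY : Commute X Y)
    (hX : ∀ i, X * K i = K i * H) (hY : ∀ i, Y * K i = K i * G) : Commute H G := by
  have kraus_mul (i : ι) : K i * (H * G) = K i * (G * H) := calc
    K i * (H * G) = X * Y * K i := by
      rw [← Matrix.mul_assoc, ← hX, Matrix.mul_assoc, ← hY, Matrix.mul_assoc]
    _ = Y * X * K i := by rw [hXY.eq]
    _ = K i * (G * H) := by
      rw [Matrix.mul_assoc, hX, ← Matrix.mul_assoc, hY, Matrix.mul_assoc]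
  have eq_sum (P : Matrix n n R) : P = ∑ i, (K i)ᴴ * (K i * P) := by
    simp only [← Matrix.mul_assoc, ← Finset.sum_mul, ← heisenbergDual_one, hK, Matrix.one_mul]
  rw [commute_iff_eq, eq_sum (H * G), eq_sum (G * H)]
  simp only [kraus_mul]

end HeisenbergDual

section Broadcasts

variable {R ι n : Type*} [CommRing R] [StarRing R] [Fintype ι] [Fintype n] [DecidableEq n]

/-- The broadcasting map with Kraus operators `K` broadcasts `H`: both marginals of its Heisenberg
dual return `H`. -/
def Broadcasts (K : ι → Matrix (n × n) n R) (H : Matrix n n R) : Prop :=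
  heisenbergDual K (H ⊗ₖ (1 : Matrix n n R)) = H ∧ heisenbergDual K ((1 : Matrix n n R) ⊗ₖ H) = H

theorem broadcasts_one_iff (K : ι → Matrix (n × n) n R) :
    Broadcasts K 1 ↔ heisenbergDual K 1 = 1 := by
  rw [Broadcasts, one_kronecker_one, and_self]

variable {K : ι → Matrix (n × n) n R} {H G : Matrix n n R} {a b : R}

theorem Broadcasts.add (hH : Broadcasts K H) (hG : Broadcasts K G) : Broadcasts K (H + G) := by
  simp only [Broadcasts, add_kronecker, kronecker_add, map_add, hH.1, hH.2, hG.1, hG.2, and_self]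

theorem Broadcasts.smul (hH : Broadcasts K H) (c : R) : Broadcasts K (c • H) := by
  simp only [Broadcasts, smul_kronecker, kronecker_smul, map_smul, hH.1, hH.2, and_self]

theorem Broadcasts.mul_self_of_quadratic (hK : heisenbergDual K 1 = 1) (hH : Broadcasts K H)
    (hquad : H * H = a • H + b • 1) : Broadcasts K (H * H) :=
  hquad ▸ (hH.smul a).add (((broadcasts_one_iff K).2 hK).smul b)

theorem commute_kronecker_one_one_kronecker {R m n : Type*} [CommSemiring R] [Fintype m] [Fintype n]
    [DecidableEq m] [DecidableEq n] (H : Matrix m m R) (G : Matrix n n R) :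
    Commute (H ⊗ₖ (1 : Matrix n n R)) ((1 : Matrix m m R) ⊗ₖ G) := by
  simp only [commute_iff_eq, ← mul_kronecker_mul, Matrix.one_mul, Matrix.mul_one]

section RCLike

variable {𝕜 : Type*} [RCLike 𝕜] {K : ι → Matrix (n × n) n 𝕜} {H G : Matrix n n 𝕜}

theorem Broadcasts.kronecker_one_mul_kraus (hK : heisenbergDual K 1 = 1) (hH : Broadcasts K H)
    (hH2 : Broadcasts K (H * H)) (hHerm : H.IsHermitian) (i : ι) :
    (H ⊗ₖ (1 : Matrix n n 𝕜)) * K i = K i * H :=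
  mul_kraus_eq_kraus_mul hK hH.1 (by rw [conjTranspose_kronecker, hHerm.eq, conjTranspose_one,
    ← mul_kronecker_mul, Matrix.one_mul, hH2.1]) i

theorem Broadcasts.one_kronecker_mul_kraus (hK : heisenbergDual K 1 = 1) (hH : Broadcasts K H)
    (hH2 : Broadcasts K (H * H)) (hHerm : H.IsHermitian) (i : ι) :
    ((1 : Matrix n n 𝕜) ⊗ₖ H) * K i = K i * H :=
  mul_kraus_eq_kraus_mul hK hH.2 (by rw [conjTranspose_kronecker, hHerm.eq, conjTranspose_one,
    ← mul_kronecker_mul, Matrix.one_mul, hH2.2]) i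

theorem Broadcasts.commute (hK : heisenbergDual K 1 = 1)
    (hH : Broadcasts K H) (hH2 : Broadcasts K (H * H)) (hHherm : H.IsHermitian)
    (hG : Broadcasts K G) (hG2 : Broadcasts K (G * G)) (hGherm : G.IsHermitian) : Commute H G :=
  commute_of_mul_kraus_eq hK (commute_kronecker_one_one_kronecker H G)
    (hH.kronecker_one_mul_kraus hK hH2 hHherm) (hG.one_kronecker_mul_kraus hK hG2 hGherm)

end RCLike

end Broadcasts

section SimultaneousDiagonalization

variable {𝕜 ι n : Type*} [RCLike 𝕜]

open Module.End in
theorem exists_orthonormalBasis_joint_eigenvector {E : Type*} [NormedAddCommGroup E]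
    [InnerProductSpace 𝕜 E] [FiniteDimensional 𝕜 E] [Fintype n]
    (hn : Module.finrank 𝕜 E = Fintype.card n) {T : ι → Module.End 𝕜 E}
    (hT : ∀ i, (T i).IsSymmetric) (hcomm : ∀ i j, Commute (T i) (T j)) :
    ∃ b : OrthonormalBasis n 𝕜 E, ∀ k, ∃ χ : ι → 𝕜, ∀ i, T i (b k) = χ i • b k := by
  classical
  let V (χ : ι → 𝕜) : Submodule 𝕜 E := ⨅ i, eigenspace (T i) (χ i)
  have hV : DirectSum.IsInternal V :=
    LinearMap.IsSymmetric.directSum_isInternal_of_pairwise_commute hT fun i j _ => hcomm i j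
  have orthogonal := LinearMap.IsSymmetric.orthogonalFamily_iInf_eigenspaces hT
  -- There are infinitely many `χ`; only finitely many have a nonzero joint eigenspace.
  have : Fintype {χ // V χ ≠ ⊥} :=
    (WellFoundedGT.finite_ne_bot_of_iSupIndep orthogonal.independent).fintype
  have orthogonal_ne_bot := orthogonal.comp (Subtype.val_injective (p := fun χ => V χ ≠ ⊥))
  have hV_ne_bot := DirectSum.isInternal_ne_bot_iff.2 hV
  let b := hV_ne_bot.subordinateOrthonormalBasis hn orthogonal_ne_bot
  let χ (k : n) := hV_ne_bot.subordinateOrthonormalBasisIndex hn (Fintype.equivFin n k)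
    orthogonal_ne_bot
  refine ⟨b.reindex (Fintype.equivFin n).symm, fun k => ⟨χ k, fun i => ?_⟩⟩
  rw [b.reindex_apply]
  exact mem_eigenspace_iff.1 ((Submodule.mem_iInf _).1
    (hV_ne_bot.subordinateOrthonormalBasis_subordinate hn _ orthogonal_ne_bot) i)

variable [Fintype n] [DecidableEq n]

theorem exists_unitary_isDiag_conj {H : ι → Matrix n n 𝕜} (hH : ∀ i, (H i).IsHermitian)
    (hcomm : ∀ i j, Commute (H i) (H j)) :
    ∃ U ∈ unitaryGroup n 𝕜, ∀ i, (Uᴴ * H i * U).IsDiag := by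
  obtain ⟨b, hb⟩ := exists_orthonormalBasis_joint_eigenvector
    finrank_euclideanSpace (fun i => isSymmetric_toEuclideanLin_iff.2 (hH i))
    (fun i j => (hcomm i j).map (toLpLinAlgEquiv (R := 𝕜) (n := n) 2))
  choose χ hχ using hb
  let U : Matrix n n 𝕜 := (EuclideanSpace.basisFun n 𝕜).toBasis.toMatrix b
  have hU : U ∈ unitaryGroup n 𝕜 :=
    (EuclideanSpace.basisFun n 𝕜).toMatrix_orthonormalBasis_mem_unitary b
  have mul_U (i : ι) : H i * U = U * diagonal fun k => χ k i := by
    ext j k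
    rw [mul_diagonal]
    simpa [U, mul_apply, toLpLin_apply, mulVec, dotProduct, Module.Basis.toMatrix_apply, mul_comm]
      using congrArg (fun v => v j) (hχ k i)
  refine ⟨U, hU, fun i => ?_⟩
  rw [Matrix.mul_assoc, mul_U, ← Matrix.mul_assoc, ← star_eq_conjTranspose,
    mem_unitaryGroup_iff'.1 hU, Matrix.one_mul]
  exact isDiag_diagonal _

end SimultaneousDiagonalization

section CopyIsometry

variable {R n : Type*} [CommRing R] [StarRing R] [Fintype n] [DecidableEq n]

/-- The isometry `e k ↦ e k ⊗ e k` that copies the standard basis. -/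
def copyIsometry (R n : Type*) [Zero R] [One R] [DecidableEq n] : Matrix (n × n) n R :=
  (1 : Matrix (n × n) (n × n) R).submatrix (Equiv.refl _) fun k => (k, k)

theorem copyIsometry_conj_kronecker (X Y : Matrix n n R) :
    (copyIsometry R n)ᴴ * (X ⊗ₖ Y) * copyIsometry R n = X ⊙ Y := by
  rw [copyIsometry, conjTranspose_submatrix, conjTranspose_one, one_submatrix_mul,
    mul_submatrix_one]
  rfl

/-- The Kraus operator that copies the orthonormal basis formed by the columns of a unitary `U`. -/
def copyKraus (U : Matrix n n R) : Matrix (n × n) n R :=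
  (U ⊗ₖ U) * copyIsometry R n * Uᴴ

theorem copyKraus_conj_kronecker (U X Y : Matrix n n R) :
    (copyKraus U)ᴴ * (X ⊗ₖ Y) * copyKraus U = U * ((Uᴴ * X * U) ⊙ (Uᴴ * Y * U)) * Uᴴ := by
  simp only [← copyIsometry_conj_kronecker, copyKraus, conjTranspose_mul, conjTranspose_kronecker,
    conjTranspose_conjTranspose, mul_kronecker_mul, Matrix.mul_assoc]

theorem conjTranspose_mul_one_mul {U : Matrix n n R} (hU : U ∈ unitaryGroup n R) :
    Uᴴ * 1 * U = 1 := by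
  rw [Matrix.mul_one, ← star_eq_conjTranspose, mem_unitaryGroup_iff'.1 hU]

theorem broadcasts_copyKraus {U X : Matrix n n R} (hU : U ∈ unitaryGroup n R)
    (hX : (Uᴴ * X * U).IsDiag) : Broadcasts (fun _ : Fin 1 => copyKraus U) X := by
  have unconj : U * (Uᴴ * X * U) * Uᴴ = X := by
    rw [← star_eq_conjTranspose, Matrix.mul_assoc, Matrix.mul_assoc, mem_unitaryGroup_iff.1 hU,
      Matrix.mul_one, ← Matrix.mul_assoc, mem_unitaryGroup_iff.1 hU, Matrix.one_mul]
  simp only [Broadcasts, heisenbergDual_apply, Fin.sum_univ_one, copyKraus_conj_kronecker,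
    conjTranspose_mul_one_mul hU, hadamard_one, one_hadamard, hX.diagonal_diag, unconj, and_self]

end CopyIsometry

theorem mul_self_fin_two {R : Type*} [CommRing R] (M : Matrix (Fin 2) (Fin 2) R) :
    M * M = M.trace • M + (-M.det) • 1 := by
  cases subsingleton_or_nontrivial R
  · exact Subsingleton.elim _ _
  have cayley_hamilton := M.aeval_self_charpoly
  simp only [charpoly_fin_two, map_add, map_sub, map_mul, map_pow, Polynomial.aeval_X,
    Polynomial.aeval_C, Algebra.algebraMap_eq_smul_one, smul_one_mul] at cayley_hamilton
  rw [← sub_eq_zero, ← cayley_hamilton, sq]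
  module

theorem exists_broadcasts_iff_commute
    {𝕜 ι n : Type*} [RCLike 𝕜] [Fintype n] [DecidableEq n] {H : ι → Matrix n n 𝕜}
    (hH : ∀ i, (H i).IsHermitian) (hquad : ∀ i, ∃ a b : 𝕜, H i * H i = a • H i + b • 1) :
    (∃ (m : ℕ) (K : Fin m → Matrix (n × n) n 𝕜),
      (∑ i, (K i)ᴴ * K i = 1) ∧ ∀ i, Broadcasts K (H i)) ↔ ∀ i j, Commute (H i) (H j) := by
  constructor
  · rintro ⟨m, K, hK, hbc⟩
    rw [← heisenbergDual_one] at hK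
    have hbc2 (i : ι) : Broadcasts K (H i * H i) :=
      let ⟨_, _, hab⟩ := hquad i
      (hbc i).mul_self_of_quadratic hK hab
    exact fun i j => (hbc i).commute hK (hbc2 i) (hH i) (hbc j) (hbc2 j) (hH j)
  · intro hcomm
    obtain ⟨U, hU, hdiag⟩ := exists_unitary_isDiag_conj hH hcomm
    have hone : Broadcasts (fun _ : Fin 1 => copyKraus U) 1 :=
      broadcasts_copyKraus hU ((conjTranspose_mul_one_mul hU).symm ▸ isDiag_one)
    refine ⟨1, fun _ => copyKraus U, ?_, fun i => broadcasts_copyKraus hU (hdiag i)⟩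
    rw [← heisenbergDual_one, (broadcasts_one_iff _).1 hone]

theorem qubit_broadcastable_iff_commutative_and_mutually_commuting_general
    {𝕜 ιA ιB n : Type*} [RCLike 𝕜] [Fintype n] [DecidableEq n]
    {A : ιA → Matrix n n 𝕜} {B : ιB → Matrix n n 𝕜}
    (hA : ∀ x, (A x).IsHermitian) (hB : ∀ y, (B y).IsHermitian)
    (hAquad : ∀ x, ∃ a b : 𝕜, A x * A x = a • A x + b • 1)
    (hBquad : ∀ y, ∃ a b : 𝕜, B y * B y = a • B y + b • 1) :
    (∃ (m : ℕ) (K : Fin m → Matrix (n × n) n 𝕜),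
      (∑ i, (K i)ᴴ * K i = 1) ∧ (∀ x, Broadcasts K (A x)) ∧ ∀ y, Broadcasts K (B y)) ↔
    (∀ x x', Commute (A x) (A x')) ∧ (∀ y y', Commute (B y) (B y')) ∧
      ∀ x y, Commute (A x) (B y) := by
  have h := exists_broadcasts_iff_commute (H := Sum.elim A B) (Sum.forall.2 ⟨hA, hB⟩)
    (Sum.forall.2 ⟨hAquad, hBquad⟩)
  simp only [Sum.forall, Sum.elim_inl, Sum.elim_inr] at h
  exact h.trans ⟨fun hc => ⟨fun x => (hc.1 x).1, fun y => (hc.2 y).2, fun x => (hc.1 x).2⟩,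
    fun ⟨hAA, hBB, hAB⟩ => ⟨fun x => ⟨hAA x, hAB x⟩, fun y => ⟨fun x => (hAB x y).symm, hBB y⟩⟩⟩

/-- Two qubit observables are broadcastable iff each is commutative and
they are mutually commuting. -/
theorem qubit_broadcastable_iff_commutative_and_mutually_commuting
    {ΩA ΩB : Type} [Fintype ΩA] [Fintype ΩB]
    (A : ΩA → Mat 2) (B : ΩB → Mat 2)
    (hApos : ∀ x, (A x).PosSemidef) (hAsum : ∑ x, A x = 1)
    (hBpos : ∀ y, (B y).PosSemidef) (hBsum : ∑ y, B y = 1) :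
    (∃ (m : ℕ) (K : Fin m → Matrix (Fin 2 × Fin 2) (Fin 2) ℂ),
      (∑ i, (K i)ᴴ * K i = 1) ∧
      (∀ x,
        (∑ i, (K i)ᴴ * (A x ⊗ₖ (1 : Mat 2)) * K i = A x) ∧
        (∑ i, (K i)ᴴ * ((1 : Mat 2) ⊗ₖ A x) * K i = A x)) ∧
      (∀ y,
        (∑ i, (K i)ᴴ * (B y ⊗ₖ (1 : Mat 2)) * K i = B y) ∧
        (∑ i, (K i)ᴴ * ((1 : Mat 2) ⊗ₖ B y) * K i = B y))) ↔
    ((∀ x x', A x * A x' = A x' * A x) ∧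
     (∀ y y', B y * B y' = B y' * B y) ∧
     (∀ x y, A x * B y = B y * A x)) :=
  qubit_broadcastable_iff_commutative_and_mutually_commuting_general (fun x => (hApos x).1)
    (fun y => (hBpos y).1) (fun _ => ⟨_, _, mul_self_fin_two _⟩) fun _ => ⟨_, _, mul_self_fin_two _⟩
end
end

section
/- Let A and B be qubit observables (observables on ℂ²) that are mutually commuting, and suppose neither A nor B is trivial (i.e., for A there exists an outcome x such that A(x) is not a scalar multiple of the identity, and likewise for B). Then A and B are broadcastable: there exists a broadcasting channel Λ with Λ*(A(x) ⊗ 1) = A(x) = Λ*(1 ⊗ A(x)) and Λ*(B(y) ⊗ 1) = B(y) = Λ*(1 ⊗ B(y)) for all outcomes x, y. -/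
/-!
In `ℂ²` a non-scalar Hermitian matrix has simple spectrum, so everything commuting with it is
diagonal in its eigenbasis. If `A x₀` and `B y₀` have simple spectrum, every `B y` is therefore
diagonal in the eigenbasis of `A x₀`; and every `A x` is as well, because `A x` and `A x₀` both
commute with `B y₀` and hence with each other. Matrices that are diagonal in a common orthonormal
basis `(uᵢ)` are broadcast by the channel with Kraus operators `|uᵢ ⊗ uᵢ⟩⟨uᵢ|`, which measures in
that basis and prepares two copies of the observed basis vector.
-/

open Matrix
open scoped Kronecker ComplexOrder

noncomputable section

section Diagonalization

variable {n R 𝕜 : Type*} [Fintype n] [DecidableEq n] [CommRing R] [RCLike 𝕜]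

theorem isDiag_of_commute_diagonal [NoZeroDivisors R] {d : n → R} (hd : Function.Injective d)
    {M : Matrix n n R} (h : Commute (diagonal d) M) : M.IsDiag := by
  intro i j hij
  have entry : d i * M i j = M i j * d j := by
    simpa only [diagonal_mul, mul_diagonal] using congr_fun₂ h.eq i j
  have : (d i - d j) * M i j = 0 := by linear_combination entry
  exact (mul_eq_zero.mp this).resolve_left (sub_ne_zero.mpr (hd.ne hij))

variable [StarRing R]

/-- For unitary `U`: `M` is diagonal in the orthonormal basis formed by the columns of `U`. -/
def IsDiagIn (U M : Matrix n n R) : Prop :=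
  (Uᴴ * M * U).IsDiag

theorem IsDiagIn.conj_diagonal_eq {U M : Matrix n n R} (h : IsDiagIn U M)
    (hU : U ∈ unitaryGroup n R) : U * diagonal (Uᴴ * M * U).diag * Uᴴ = M := by
  have hUU : U * Uᴴ = 1 := mem_unitaryGroup_iff.mp hU
  calc U * diagonal (Uᴴ * M * U).diag * Uᴴ
    _ = U * Uᴴ * M * (U * Uᴴ) := by rw [h.diagonal_diag]; simp only [mul_assoc]
    _ = M := by rw [hUU, one_mul, mul_one]

theorem IsDiagIn.commute {U M N : Matrix n n R} (hM : IsDiagIn U M) (hN : IsDiagIn U N)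
    (hU : U ∈ unitaryGroup n R) : Commute M N := by
  have h := (commute_diagonal (Uᴴ * M * U).diag (Uᴴ * N * U).diag).map
    (Unitary.conjStarAlgAut R _ ⟨U, hU⟩)
  simpa only [Unitary.conjStarAlgAut_apply, Unitary.coe_star, star_eq_conjTranspose,
    hM.conj_diagonal_eq hU, hN.conj_diagonal_eq hU, commute_iff_eq] using h

theorem isDiagIn_eigenvectorUnitary_of_commute {A M : Matrix n n 𝕜} (hA : A.IsHermitian)
    (hsimple : Function.Injective hA.eigenvalues) (h : Commute A M) :
    IsDiagIn (hA.eigenvectorUnitary : Matrix n n 𝕜) M := by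
  have hconj := h.map (Unitary.conjStarAlgAut 𝕜 _ (star hA.eigenvectorUnitary))
  rw [hA.conjStarAlgAut_star_eigenvectorUnitary, Unitary.conjStarAlgAut_star_apply] at hconj
  exact isDiag_of_commute_diagonal (RCLike.ofReal_injective.comp hsimple) hconj

theorem eq_smul_one_of_eigenvalues_eq {A : Matrix n n 𝕜} (hA : A.IsHermitian) {c : ℝ}
    (h : ∀ i, hA.eigenvalues i = c) : A = (c : 𝕜) • (1 : Matrix n n 𝕜) := by
  have hdiag : diagonal (RCLike.ofReal ∘ hA.eigenvalues) = (c : 𝕜) • (1 : Matrix n n 𝕜) := by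
    rw [smul_one_eq_diagonal]
    exact congrArg diagonal (funext fun i => congrArg RCLike.ofReal (h i))
  rw [hA.spectral_theorem, hdiag, map_smul, map_one]

theorem eigenvalues_injective_of_ne_smul_one {A : Matrix (Fin 2) (Fin 2) 𝕜} (hA : A.IsHermitian)
    (h : ¬ ∃ c : 𝕜, A = c • (1 : Matrix (Fin 2) (Fin 2) 𝕜)) :
    Function.Injective hA.eigenvalues := by
  have hne : hA.eigenvalues 0 ≠ hA.eigenvalues 1 := fun heq =>
    h ⟨_, eq_smul_one_of_eigenvalues_eq hA (Fin.forall_fin_two.mpr ⟨heq, rfl⟩)⟩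
  simpa [Function.Injective, Fin.forall_fin_two, hne] using hne.symm

end Diagonalization

section Broadcasting

variable {n R : Type*} [Fintype n] [DecidableEq n] [CommRing R] [StarRing R]

/-- The channel `Λ` with Kraus operators `K` broadcasts `M`:
`Λ*(M ⊗ 1) = M` and `Λ*(1 ⊗ M) = M`. -/
def IsBroadcastBy {ι : Type*} [Fintype ι] (K : ι → Matrix (n × n) n R) (M : Matrix n n R) : Prop :=
  (∑ i, (K i)ᴴ * (M ⊗ₖ (1 : Matrix n n R)) * K i = M) ∧
  (∑ i, (K i)ᴴ * ((1 : Matrix n n R) ⊗ₖ M) * K i = M)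

/-- The Kraus operator `|uᵢ ⊗ uᵢ⟩⟨uᵢ|` of the channel cloning the basis of columns `uᵢ` of `U`,
written as the cloning operator `|eᵢ ⊗ eᵢ⟩⟨eᵢ|` of the standard basis transported along `U`. -/
def cloningKraus (U : Matrix n n R) (i : n) : Matrix (n × n) n R :=
  (U ⊗ₖ U) * single (i, i) i (1 : R) * Uᴴ

theorem sum_cloningKraus_conj_kronecker (U M N : Matrix n n R) :
    ∑ i, (cloningKraus U i)ᴴ * (M ⊗ₖ N) * cloningKraus U i =
      U * diagonal (fun i => (Uᴴ * M * U) i i * (Uᴴ * N * U) i i) * Uᴴ := by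
  have term (i : n) : (cloningKraus U i)ᴴ * (M ⊗ₖ N) * cloningKraus U i =
      U * single i i ((Uᴴ * M * U) i i * (Uᴴ * N * U) i i) * Uᴴ :=
    calc (cloningKraus U i)ᴴ * (M ⊗ₖ N) * cloningKraus U i
      _ = U * (single i (i, i) (1 : R) * ((U ⊗ₖ U)ᴴ * (M ⊗ₖ N) * (U ⊗ₖ U)) *
            single (i, i) i (1 : R)) * Uᴴ := by
        simp only [cloningKraus, conjTranspose_mul, conjTranspose_conjTranspose,
          conjTranspose_single, star_one, Matrix.mul_assoc]
      _ = U * single i i ((Uᴴ * M * U) i i * (Uᴴ * N * U) i i) * Uᴴ := by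
        rw [conjTranspose_kronecker, ← mul_kronecker_mul, ← mul_kronecker_mul,
          single_mul_mul_single, one_mul, mul_one, kronecker_apply]
  simp only [term, ← Matrix.sum_mul, ← Matrix.mul_sum, sum_single_eq_diagonal]

theorem sum_cloningKraus_conjTranspose_mul_self {U : Matrix n n R} (hU : U ∈ unitaryGroup n R) :
    ∑ i, (cloningKraus U i)ᴴ * cloningKraus U i = 1 := by
  have hstar_mul : Uᴴ * U = 1 := mem_unitaryGroup_iff'.mp hU
  have hmul_star : U * Uᴴ = 1 := mem_unitaryGroup_iff.mp hU
  simpa [hstar_mul, hmul_star] using sum_cloningKraus_conj_kronecker U 1 1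

theorem IsDiagIn.isBroadcastBy_cloningKraus {U M : Matrix n n R} (h : IsDiagIn U M)
    (hU : U ∈ unitaryGroup n R) : IsBroadcastBy (cloningKraus U) M := by
  have hstar_mul : Uᴴ * U = 1 := mem_unitaryGroup_iff'.mp hU
  constructor <;>
    simp only [sum_cloningKraus_conj_kronecker, hstar_mul, one_apply_eq, mul_one, one_mul] <;>
    exact h.conj_diagonal_eq hU

end Broadcasting

theorem qubit_mutually_commuting_nontrivial_broadcastable_general
    {n 𝕜 ΩA ΩB : Type*} [Fintype n] [DecidableEq n] [RCLike 𝕜]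
    (A : ΩA → Matrix n n 𝕜) (B : ΩB → Matrix n n 𝕜) (hcomm : ∀ x y, Commute (A x) (B y))
    (hA : ∃ x, ∃ h : (A x).IsHermitian, Function.Injective h.eigenvalues)
    (hB : ∃ y, ∃ h : (B y).IsHermitian, Function.Injective h.eigenvalues) :
    ∃ K : n → Matrix (n × n) n 𝕜,
      (∑ i, (K i)ᴴ * K i = 1) ∧
      (∀ x, IsBroadcastBy K (A x)) ∧
      (∀ y, IsBroadcastBy K (B y)) := by
  obtain ⟨x₀, hx₀, hx₀_simple⟩ := hA
  obtain ⟨y₀, hy₀, hy₀_simple⟩ := hB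
  have diag_A_in_basis_B (x) : IsDiagIn (hy₀.eigenvectorUnitary : Matrix n n 𝕜) (A x) :=
    isDiagIn_eigenvectorUnitary_of_commute hy₀ hy₀_simple (hcomm x y₀).symm
  have commute_A (x) : Commute (A x₀) (A x) :=
    (diag_A_in_basis_B x₀).commute (diag_A_in_basis_B x) hy₀.eigenvectorUnitary.2
  have broadcast_of_commute {M : Matrix n n 𝕜} (hM : Commute (A x₀) M) :
      IsBroadcastBy (cloningKraus (hx₀.eigenvectorUnitary : Matrix n n 𝕜)) M :=
    (isDiagIn_eigenvectorUnitary_of_commute hx₀ hx₀_simple hM).isBroadcastBy_cloningKraus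
      hx₀.eigenvectorUnitary.2
  exact ⟨cloningKraus hx₀.eigenvectorUnitary,
    sum_cloningKraus_conjTranspose_mul_self hx₀.eigenvectorUnitary.2,
    fun x => broadcast_of_commute (commute_A x), fun y => broadcast_of_commute (hcomm x₀ y)⟩

/-- Mutually commuting qubit observables, neither of which is trivial,
are broadcastable. -/
theorem qubit_mutually_commuting_nontrivial_broadcastable
    {ΩA ΩB : Type} [Fintype ΩA] [Fintype ΩB]
    (A : ΩA → Mat 2) (B : ΩB → Mat 2)
    (hApos : ∀ x, (A x).PosSemidef) (hAsum : ∑ x, A x = 1)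
    (hBpos : ∀ y, (B y).PosSemidef) (hBsum : ∑ y, B y = 1)
    (hcomm : ∀ x y, A x * B y = B y * A x)
    (hAnt : ∃ x, ¬ ∃ c : ℂ, A x = c • (1 : Mat 2))
    (hBnt : ∃ y, ¬ ∃ c : ℂ, B y = c • (1 : Mat 2)) :
    ∃ (m : ℕ) (K : Fin m → Matrix (Fin 2 × Fin 2) (Fin 2) ℂ),
      (∑ i, (K i)ᴴ * K i = 1) ∧
      (∀ x,
        (∑ i, (K i)ᴴ * (A x ⊗ₖ (1 : Mat 2)) * K i = A x) ∧
        (∑ i, (K i)ᴴ * ((1 : Mat 2) ⊗ₖ A x) * K i = A x)) ∧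
      (∀ y,
        (∑ i, (K i)ᴴ * (B y ⊗ₖ (1 : Mat 2)) * K i = B y) ∧
        (∑ i, (K i)ᴴ * ((1 : Mat 2) ⊗ₖ B y) * K i = B y)) := by
  have simple {M : Mat 2} (hM : M.PosSemidef) (hnt : ¬ ∃ c : ℂ, M = c • (1 : Mat 2)) :
      ∃ h : M.IsHermitian, Function.Injective h.eigenvalues :=
    ⟨hM.isHermitian, eigenvalues_injective_of_ne_smul_one hM.isHermitian hnt⟩
  exact ⟨2, qubit_mutually_commuting_nontrivial_broadcastable_general A B hcomm
    (hAnt.imp fun x => simple (hApos x)) (hBnt.imp fun y => simple (hBpos y))⟩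
end
end
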